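/- For a real random variable Y with E[Y] = 0 and E[Y²] = 1 and finite j-th moment (j ≥ 3), the expectation of the j-th Hermite polynomial satisfies E[H_j(Y)] = Σ_{k=1}^{⌊j/3⌋} Σ_{r_1+...+r_k = j, each r_i ≥ 3} (κ_{r_1}···κ_{r_k})/(r_1!···r_k!) · j!/k!, where κ_r denotes the r-th cumulant of Y. In particular E[H_0(Y)] = 1 and E[H_1(Y)] = E[H_2(Y)] = 0. -/

import Mathlib

open MeasureTheory ProbabilityTheory Complex Finset

/-!
The Hermite generating function factors as `e^{tx - t²/2} = e^{tx} e^{-t²/2}`, so taking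
expectations gives `∑ E[Hₙ(Y)] tⁿ / n! = E[e^{tY}] e^{-t²/2} = exp (∑ κᵣ tʳ / r! - t²/2)`, and
since `κ₀ = κ₁ = 0` and `κ₂ = 1` the exponent begins at `t³`. Only finitely many moments exist, so
this is read as an identity of formal power series up to degree `j`. Exponentials of formal power
series are recognised by their differential equation `y' = b y`, which determines the coefficients
of `y` up to degree `N` from those of `b * y` below `N`; for the moments, this equation is
the Leibniz rule for `φ' = (log φ)' φ` at `0`, where `φ` is the characteristic function of `Y`.
-/

section FormalExponential

open PowerSeries

theorem coeff_eq_of_coeff_derivative_eq_coeff_mul {R : Type*} [CommRing R] [IsAddTorsionFree R]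
    {b y z : R⟦X⟧} {N : ℕ} (h0 : constantCoeff y = constantCoeff z)
    (hy : ∀ n < N, coeff n (d⁄dX R y) = coeff n (b * y))
    (hz : ∀ n < N, coeff n (d⁄dX R z) = coeff n (b * z)) {n : ℕ} (hn : n ≤ N) :
    coeff n y = coeff n z := by
  induction n using Nat.strong_induction_on with
  | _ n ih =>
    cases n with
    | zero => simpa using h0
    | succ n =>
      have hmul : coeff n (b * y) = coeff n (b * z) := by
        simp only [coeff_mul]
        refine sum_congr rfl fun p hp => ?_
        have hp2 : p.2 ≤ n := HasAntidiagonal.antidiagonal.snd_le hp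
        rw [ih p.2 (by omega) (by omega)]
      have hsucc : (n + 1) • coeff (n + 1) y = (n + 1) • coeff (n + 1) z := by
        have h := (hy n hn).trans (hmul.trans (hz n hn).symm)
        simpa only [coeff_derivative, nsmul_eq_mul, mul_comm, Nat.cast_add_one] using h
      exact nsmul_right_injective n.succ_ne_zero hsucc

theorem coeff_pow_eq_sum_piFinset {R : Type*} [CommSemiring R] {f : R⟦X⟧} {d n N : ℕ}
    (hf : X ^ d ∣ f) (hn : n ≤ N) (k : ℕ) :
    coeff n (f ^ k) = ∑ r ∈ Fintype.piFinset (fun _ : Fin k => Icc d N),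
      if ∑ i, r i = n then ∏ i, coeff (r i) f else 0 := by
  have hprod : f ^ k = ∏ _i : Fin k, f := by simp
  rw [hprod, coeff_prod, ← sum_filter, eq_comm]
  refine sum_of_injOn Finsupp.equivFunOnFinite.symm
    Finsupp.equivFunOnFinite.symm.injective.injOn (fun r hr => ?_) (fun l hl hr => ?_)
    (fun r _ => rfl)
  · simpa using (mem_filter.mp hr).2
  · obtain ⟨hsum, -⟩ := mem_finsuppAntidiag.mp hl
    obtain ⟨i, hi⟩ : ∃ i, l i < d := by
      by_contra! hd
      refine hr ⟨l, ?_, by simp⟩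
      have hle (i : Fin k) : l i ≤ N :=
        (single_le_sum (fun _ _ => Nat.zero_le _) (mem_univ i)).trans (hsum.trans_le hn)
      simp [hsum, hd, hle]
    exact prod_eq_zero (mem_univ i) (X_pow_dvd_iff.mp hf _ hi)

variable {R : Type*} [CommRing R] [Algebra ℚ R]

theorem derivative_exp_subst {f : R⟦X⟧} (hf : HasSubst f) :
    d⁄dX R ((PowerSeries.exp R).subst f) = d⁄dX R f * (PowerSeries.exp R).subst f := by
  rw [derivative_subst hf, derivative_exp, mul_comm]

theorem coeff_exp_subst_of_X_pow_dvd {f : R⟦X⟧} {d : ℕ} (hd : 0 < d) (hf : X ^ d ∣ f) (n : ℕ) :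
    coeff n ((PowerSeries.exp R).subst f) =
      ∑ k ∈ range (n / d + 1), algebraMap ℚ R (1 / k.factorial) * coeff n (f ^ k) := by
  have hsubst : HasSubst f :=
    .of_constantCoeff_zero' (X_dvd_iff.mp ((dvd_pow_self X hd.ne').trans hf))
  rw [coeff_subst' hsubst, finsum_eq_sum_of_support_subset (s := range (n / d + 1))]
  · simp only [coeff_exp, smul_eq_mul]
  · intro k hk
    contrapose! hk
    have hnk : n < d * k := by
      simpa [Nat.lt_succ_iff, Nat.div_lt_iff_lt_mul hd, mul_comm] using hk
    have hdvd : (X : R⟦X⟧) ^ (d * k) ∣ f ^ k := pow_mul (X : R⟦X⟧) d k ▸ pow_dvd_pow_of_dvd hf k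
    simp [X_pow_dvd_iff.mp hdvd n hnk]

theorem constantCoeff_exp_subst {f : R⟦X⟧} (hf : constantCoeff f = 0) :
    constantCoeff ((PowerSeries.exp R).subst f) = 1 := by
  have hX : X ^ 1 ∣ f := by simpa using X_dvd_iff.mpr hf
  simpa using coeff_exp_subst_of_X_pow_dvd one_pos hX 0

theorem exp_subst_add {f g : R⟦X⟧} (hf : constantCoeff f = 0) (hg : constantCoeff g = 0) :
    (PowerSeries.exp R).subst (f + g) =
      (PowerSeries.exp R).subst f * (PowerSeries.exp R).subst g := by
  have : IsAddTorsionFree R := .of_module_rat R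
  have hf' : HasSubst f := .of_constantCoeff_zero' hf
  have hg' : HasSubst g := .of_constantCoeff_zero' hg
  ext n
  refine coeff_eq_of_coeff_derivative_eq_coeff_mul (b := d⁄dX R (f + g)) ?_
    (fun m _ => ?_) (fun m _ => ?_) le_rfl
  · simp [constantCoeff_exp_subst, hf, hg]
  · rw [derivative_exp_subst (hf'.add hg')]
  · rw [Derivation.leibniz, derivative_exp_subst hf', derivative_exp_subst hg',
      map_add (d⁄dX R)]
    simp only [smul_eq_mul]
    ring_nf

theorem coeff_exp_subst_mul_factorial {K : Type*} [Field K] [CharZero K] {f : K⟦X⟧}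
    {d n : ℕ} (hd : 0 < d) (hn : 0 < n) (hf : X ^ d ∣ f) :
    coeff n ((PowerSeries.exp K).subst f) * n.factorial =
      ∑ k ∈ Icc 1 (n / d), ∑ r ∈ Fintype.piFinset (fun _ : Fin k => Icc d n),
        if ∑ i, r i = n then
          (∏ i, coeff (r i) f) * ((n.factorial : K) / (k.factorial : K))
        else 0 := by
  have hrange (m : ℕ) : range (m + 1) = insert 0 (Icc 1 m) := by
    ext k
    simp only [mem_range, mem_insert, mem_Icc]
    omega
  rw [coeff_exp_subst_of_X_pow_dvd hd hf, hrange, sum_insert (by simp), pow_zero,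
    coeff_one, if_neg hn.ne', mul_zero, zero_add, sum_mul]
  refine sum_congr rfl fun k _ => ?_
  rw [coeff_pow_eq_sum_piFinset hf le_rfl, mul_sum, sum_mul]
  refine sum_congr rfl fun r _ => ?_
  split_ifs
  · simp only [map_div₀, map_one, map_natCast]
    ring
  · simp

end FormalExponential

section ExponentialGeneratingFunction

open PowerSeries

variable {K : Type*} [Field K]

/-- The exponential generating function `∑ aₙ Xⁿ / n!` of a sequence `a`, as a formal power series;
it encodes sequences of moments, of cumulants and of derivatives at a point. -/
noncomputable def egf (a : ℕ → K) : K⟦X⟧ :=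
  PowerSeries.mk fun n => a n / n.factorial

@[simp]
theorem coeff_egf (a : ℕ → K) (n : ℕ) : coeff n (egf a) = a n / n.factorial :=
  coeff_mk _ _

@[simp]
theorem constantCoeff_egf (a : ℕ → K) : constantCoeff (egf a) = a 0 := by
  simp [← coeff_zero_eq_constantCoeff_apply]

variable [CharZero K]

theorem derivative_egf (a : ℕ → K) : d⁄dX K (egf a) = egf fun n => a (n + 1) := by
  ext n
  have hn : (n : K) + 1 ≠ 0 := n.cast_add_one_ne_zero
  rw [coeff_derivative, coeff_egf, coeff_egf, Nat.factorial_succ]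
  push_cast
  field_simp

theorem coeff_egf_mul_egf (a b : ℕ → K) (n : ℕ) :
    coeff n (egf a * egf b) =
      (∑ i ∈ range (n + 1), n.choose i * a i * b (n - i)) / n.factorial := by
  rw [coeff_mul, Finset.Nat.sum_antidiagonal_eq_sum_range_succ_mk, sum_div]
  refine sum_congr rfl fun i hi => ?_
  have hn : (n.factorial : K) ≠ 0 := Nat.cast_ne_zero.mpr n.factorial_ne_zero
  rw [coeff_egf, coeff_egf, Nat.cast_choose K (Nat.lt_succ_iff.mp (mem_range.mp hi))]
  field_simp

theorem coeff_egf_eq_coeff_exp_subst {a c : ℕ → K} {N : ℕ} (ha : a 0 = 1) (hc : c 0 = 0)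
    (hrec : ∀ n < N, a (n + 1) = ∑ i ∈ range (n + 1), n.choose i * c (i + 1) * a (n - i))
    {n : ℕ} (hn : n ≤ N) :
    coeff n (egf a) = coeff n ((PowerSeries.exp K).subst (egf c)) := by
  have hc0 : constantCoeff (egf c) = 0 := by simp [hc]
  refine coeff_eq_of_coeff_derivative_eq_coeff_mul (b := d⁄dX K (egf c)) ?_
    (fun m hm => ?_) (fun m _ => ?_) hn
  · simp [constantCoeff_exp_subst hc0, ha]
  · rw [derivative_egf, derivative_egf, coeff_egf_mul_egf, coeff_egf, hrec m hm]
  · rw [derivative_exp_subst (.of_constantCoeff_zero' hc0)]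

theorem exp_subst_smul_X (x : K) : (PowerSeries.exp K).subst (x • X : K⟦X⟧) = egf (x ^ ·) := by
  rw [← rescale_eq_subst]
  ext n
  simp [div_eq_mul_inv]

end ExponentialGeneratingFunction

theorem iteratedDeriv_succ_eq_sum_of_deriv_eq_mul {𝕜 A : Type*} [NontriviallyNormedField 𝕜]
    [NormedCommRing A] [NormedAlgebra 𝕜 A] {f g : 𝕜 → A} {x : 𝕜} {n : ℕ}
    (hfg : deriv f =ᶠ[nhds x] deriv g * f)
    (hf : ContDiffAt 𝕜 n f x) (hg : ContDiffAt 𝕜 n (deriv g) x) :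
    iteratedDeriv (n + 1) f x =
      ∑ i ∈ range (n + 1),
        n.choose i * iteratedDeriv (i + 1) g x * iteratedDeriv (n - i) f x := by
  simp only [iteratedDeriv_succ', hfg.iteratedDeriv_eq n, iteratedDeriv_mul hg hf]

theorem iteratedDeriv_succ_eq_sum_log {f : ℝ → ℂ} {x : ℝ} {n : ℕ}
    (hf : ContDiffAt ℝ (n + 1) f x) (hx : f x ∈ slitPlane) :
    iteratedDeriv (n + 1) f x =
      ∑ i ∈ range (n + 1), n.choose i * iteratedDeriv (i + 1) (fun u => log (f u)) x *
        iteratedDeriv (n - i) f x := by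
  have hlog : ContDiffAt ℝ (n + 1) (fun u => log (f u)) x :=
    ((contDiffAt_log hx).restrict_scalars ℝ).comp x hf
  have hderiv : deriv f =ᶠ[nhds x] deriv (fun u => log (f u)) * f := by
    filter_upwards [(hf.of_le le_add_self).eventually (by simp),
      hf.continuousAt.eventually_mem (isOpen_slitPlane.mem_nhds hx)] with u hu hslit
    have hdiff : DifferentiableAt ℝ f u := hu.differentiableAt one_ne_zero
    rw [Pi.mul_apply, (hdiff.hasDerivAt.clog_real hslit).deriv,
      div_mul_cancel₀ _ (slitPlane_ne_zero hslit)]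
  exact iteratedDeriv_succ_eq_sum_of_deriv_eq_mul hderiv (hf.of_le le_self_add)
    (hlog.derivWithin le_rfl)

theorem eq_iteratedDeriv_of_hasSum {𝕜 : Type*} [RCLike 𝕜] {f : 𝕜 → 𝕜} {a : ℕ → 𝕜}
    (h : ∀ t, HasSum (fun n => a n * t ^ n / n.factorial) (f t)) (n : ℕ) :
    a n = iteratedDeriv n f 0 := by
  have hf : HasFPowerSeriesAt f
      (FormalMultilinearSeries.ofScalars 𝕜 fun n => a n / (n.factorial : 𝕜)) 0 := by
    rw [hasFPowerSeriesAt_iff]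
    refine .of_forall fun t => ?_
    have hterm : (fun m => t ^ m * (a m / (m.factorial : 𝕜))) =
        fun m => a m * t ^ m / (m.factorial : 𝕜) := by
      funext m
      ring
    simpa only [FormalMultilinearSeries.coeff_ofScalars, smul_eq_mul, zero_add, hterm] using h t
  have hcoeff := congrArg (FormalMultilinearSeries.coeff · n)
    (hf.eq_formalMultilinearSeries hf.analyticAt.hasFPowerSeriesAt)
  simp only [FormalMultilinearSeries.coeff_ofScalars] at hcoeff
  exact (div_left_inj' (Nat.cast_ne_zero.mpr n.factorial_ne_zero)).mp hcoeff

section Hermite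

variable {H : ℕ → ℝ → ℝ}

theorem deriv_mul_sub_sq_div_two (x : ℝ) :
    deriv (fun t : ℝ => t * x - t ^ 2 / 2) = fun t => x - t := by
  funext t
  have h : HasDerivAt (fun t : ℝ => t * x - t ^ 2 / 2) (1 * x - ↑2 * t ^ (2 - 1) / 2) t :=
    ((hasDerivAt_id t).mul_const x).sub ((hasDerivAt_pow 2 t).div_const 2)
  simpa using h.deriv

open PowerSeries in
theorem egf_iteratedDeriv_mul_sub_sq_div_two (x : ℝ) :
    egf (fun n => iteratedDeriv n (fun t : ℝ => t * x - t ^ 2 / 2) 0) =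
      x • X + C (-1 / 2) * X ^ 2 := by
  ext n
  rcases n with _ | _ | _ | n
  · simp
  · simp [deriv_mul_sub_sq_div_two, coeff_X_pow]
  · simp [iteratedDeriv_succ', deriv_mul_sub_sq_div_two, coeff_X, coeff_X_pow]
  · have hderiv : deriv (fun t : ℝ => x - t) = fun _ => -1 := by
      funext t
      simp
    simp [iteratedDeriv_succ', deriv_mul_sub_sq_div_two, hderiv, coeff_X, coeff_X_pow]

open PowerSeries in
theorem egf_hermite
    (hgen : ∀ t x : ℝ, HasSum (fun n : ℕ => H n x * t ^ n / n.factorial)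
      (Real.exp (t * x - t ^ 2 / 2))) (x : ℝ) :
    egf (H · x) = (PowerSeries.exp ℝ).subst (x • X + C (-1 / 2) * X ^ 2 : ℝ⟦X⟧) := by
  have hH (n : ℕ) : H n x = iteratedDeriv n (fun t => Real.exp (t * x - t ^ 2 / 2)) 0 :=
    eq_iteratedDeriv_of_hasSum (hgen · x) n
  have hexp : deriv (fun t => Real.exp (t * x - t ^ 2 / 2)) =
      deriv (fun t : ℝ => t * x - t ^ 2 / 2) * fun t => Real.exp (t * x - t ^ 2 / 2) := by
    funext t
    rw [_root_.deriv_exp (by fun_prop), Pi.mul_apply, mul_comm]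
  rw [← egf_iteratedDeriv_mul_sub_sq_div_two]
  ext n
  refine coeff_egf_eq_coeff_exp_subst (by simp [hH]) (by simp) (fun m _ => ?_) le_rfl
  simp only [hH]
  refine iteratedDeriv_succ_eq_sum_of_deriv_eq_mul hexp.eventuallyEq (by fun_prop) ?_
  rw [deriv_mul_sub_sq_div_two]
  fun_prop

open PowerSeries in
theorem egf_hermite_eq_egf_pow_mul
    (hgen : ∀ t x : ℝ, HasSum (fun n : ℕ => H n x * t ^ n / n.factorial)
      (Real.exp (t * x - t ^ 2 / 2))) (x : ℝ) :
    egf (H · x) = egf (x ^ ·) * (PowerSeries.exp ℝ).subst (C (-1 / 2) * X ^ 2 : ℝ⟦X⟧) := by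
  rw [egf_hermite hgen, exp_subst_add (by simp) (by simp), exp_subst_smul_X]

end Hermite

theorem integrable_pow_of_memLp {Ω : Type*} [MeasurableSpace Ω] {P : Measure Ω}
    [IsFiniteMeasure P] {Y : Ω → ℝ} {n : ℕ} (hY : MemLp Y n P) :
    Integrable (fun ω => Y ω ^ n) P := by
  refine (integrable_norm_iff (hY.aestronglyMeasurable.pow n)).mp ?_
  simpa only [Pi.pow_apply, norm_pow] using hY.integrable_norm_pow'

section Cumulant

variable {Ω : Type*} [MeasurableSpace Ω] {P : Measure Ω} {Y : Ω → ℝ}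

/-- The `r`-th cumulant `κᵣ = i⁻ʳ (dʳ/duʳ) log E[exp (iuY)]` at `u = 0`. It is complex-valued, with
the principal branch of the logarithm, and is only meaningful when the `r`-th moment is finite. -/
noncomputable def cumulant (Y : Ω → ℝ) (r : ℕ) (P : Measure Ω) : ℂ :=
  I ^ (-(r : ℤ)) *
    iteratedDeriv r (fun u : ℝ => log (∫ ω, Complex.exp (I * u * Y ω) ∂P)) 0

theorem charFun_map_eq_integral (hY : AEMeasurable Y P) (u : ℝ) :
    charFun (P.map Y) u = ∫ ω, Complex.exp (I * u * Y ω) ∂P := by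
  rw [charFun_apply_real, integral_map hY (by fun_prop)]
  congr! 3
  ring

theorem iteratedDeriv_charFun_map_zero [IsFiniteMeasure P] {n : ℕ} (hY : MemLp Y n P) :
    iteratedDeriv n (charFun (P.map Y)) 0 = I ^ n * moment Y n P := by
  have hmeas : AEMeasurable Y P := hY.aestronglyMeasurable.aemeasurable
  have hid : MemLp id n (P.map Y) := (memLp_map_measure_iff (by fun_prop) hmeas).mpr hY
  rw [iteratedDeriv_charFun_zero hid, integral_map hmeas (by fun_prop)]
  rfl

theorem cumulant_zero [IsProbabilityMeasure P] : cumulant Y 0 P = 0 := by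
  simp [cumulant]

theorem moment_succ_eq_sum_cumulant [IsProbabilityMeasure P] {n : ℕ}
    (hY : MemLp Y (n + 1 : ℕ) P) :
    (moment Y (n + 1) P : ℂ) =
      ∑ i ∈ range (n + 1), n.choose i * cumulant Y (i + 1) P * moment Y (n - i) P := by
  have hmeas : AEMeasurable Y P := hY.aestronglyMeasurable.aemeasurable
  have : IsProbabilityMeasure (P.map Y) := Measure.isProbabilityMeasure_map hmeas
  have hsmooth : ContDiff ℝ (n + 1 : ℕ) (charFun (P.map Y)) :=
    contDiff_charFun ((memLp_map_measure_iff (by fun_prop) hmeas).mpr hY)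
  have hmoment (m : ℕ) (hm : m ≤ n + 1) :
      iteratedDeriv m (charFun (P.map Y)) 0 = I ^ m * moment Y m P :=
    iteratedDeriv_charFun_map_zero (hY.mono_exponent (mod_cast hm))
  have hcumulant (r : ℕ) :
      iteratedDeriv r (fun u => log (charFun (P.map Y) u)) 0 = I ^ r * cumulant Y r P := by
    simp only [cumulant, charFun_map_eq_integral hmeas, zpow_neg, zpow_natCast]
    rw [mul_inv_cancel_left₀ (pow_ne_zero r I_ne_zero)]
  have hlog := iteratedDeriv_succ_eq_sum_log (f := charFun (P.map Y)) (x := 0) (n := n)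
    (mod_cast hsmooth.contDiffAt) (by simp)
  refine mul_left_cancel₀ (pow_ne_zero (n + 1) I_ne_zero) ?_
  rw [← hmoment (n + 1) le_rfl, hlog, mul_sum]
  refine sum_congr rfl fun i hi => ?_
  have hin : i ≤ n := Nat.lt_succ_iff.mp (mem_range.mp hi)
  have hI : I ^ (n + 1) = I ^ (i + 1) * I ^ (n - i) := by
    rw [← pow_add]
    congr 1
    omega
  rw [hcumulant, hmoment (n - i) (by omega), hI]
  ring

theorem moment_order_zero [IsProbabilityMeasure P] : moment Y 0 P = 1 := by
  simp [moment_def]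

theorem cumulant_one [IsProbabilityMeasure P] (hY : MemLp Y 1 P) :
    cumulant Y 1 P = moment Y 1 P := by
  have h := moment_succ_eq_sum_cumulant (Y := Y) (P := P) (n := 0) (by simpa using hY)
  simpa [moment_order_zero] using h.symm

theorem cumulant_two [IsProbabilityMeasure P] (hY : MemLp Y 2 P) :
    cumulant Y 2 P = moment Y 2 P - moment Y 1 P ^ 2 := by
  have hone : cumulant Y 1 P = moment Y 1 P := cumulant_one (hY.mono_exponent one_le_two)
  have hrec : (moment Y 2 P : ℂ) = cumulant Y 1 P * moment Y 1 P + cumulant Y 2 P := by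
    rw [moment_succ_eq_sum_cumulant (n := 1) (mod_cast hY), sum_range_succ, sum_range_one,
      Nat.sub_self, moment_order_zero]
    simp
  rw [hrec, hone]
  ring

end Cumulant

section HermiteMoment

open PowerSeries

variable {Ω : Type*} [MeasurableSpace Ω] {P : Measure Ω} {Y : Ω → ℝ}

theorem integral_hermite_div_factorial [IsFiniteMeasure P] {H : ℕ → ℝ → ℝ}
    (hgen : ∀ t x : ℝ, HasSum (fun n : ℕ => H n x * t ^ n / n.factorial)
      (Real.exp (t * x - t ^ 2 / 2))) {n : ℕ} (hY : MemLp Y n P) :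
    (∫ ω, H n (Y ω) ∂P) / n.factorial = coeff n
      (egf (moment Y · P) * (PowerSeries.exp ℝ).subst (C (-1 / 2) * X ^ 2 : ℝ⟦X⟧)) := by
  have hH (x : ℝ) := congrArg (coeff n) (egf_hermite_eq_egf_pow_mul hgen x)
  simp only [coeff_egf, coeff_mul] at hH
  rw [← integral_div]
  simp only [hH, coeff_mul, coeff_egf]
  rw [integral_finsetSum _ fun p hp => ?_]
  · simp only [integral_mul_const, integral_div, moment_def, Pi.pow_apply]
  · have hp1 : (p.1 : ENNReal) ≤ n := mod_cast HasAntidiagonal.antidiagonal.fst_le hp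
    exact ((integrable_pow_of_memLp (hY.mono_exponent hp1)).div_const _).mul_const _

theorem integral_hermite_eq_coeff_exp_cumulant [IsProbabilityMeasure P] {H : ℕ → ℝ → ℝ}
    (hgen : ∀ t x : ℝ, HasSum (fun n : ℕ => H n x * t ^ n / n.factorial)
      (Real.exp (t * x - t ^ 2 / 2))) {n : ℕ} (hY : MemLp Y n P) {κ : ℕ → ℝ}
    (hκ : ∀ r ≤ n, (κ r : ℂ) = cumulant Y r P) :
    ∫ ω, H n (Y ω) ∂P = coeff n
      ((PowerSeries.exp ℝ).subst (egf κ + C (-1 / 2) * X ^ 2 : ℝ⟦X⟧)) * n.factorial := by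
  have hκ0 : κ 0 = 0 := by simpa [cumulant_zero] using hκ 0 n.zero_le
  have hrec (m : ℕ) (hm : m < n) : moment Y (m + 1) P =
      ∑ i ∈ range (m + 1), m.choose i * κ (i + 1) * moment Y (m - i) P := by
    have h := moment_succ_eq_sum_cumulant (hY.mono_exponent (mod_cast hm))
    rw [← ofReal_inj, h]
    push_cast
    refine sum_congr rfl fun i hi => ?_
    have := mem_range.mp hi
    rw [hκ (i + 1) (by omega)]
  have hmoment (m : ℕ) (hm : m ≤ n) :
      coeff m (egf (moment Y · P)) = coeff m ((PowerSeries.exp ℝ).subst (egf κ)) :=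
    coeff_egf_eq_coeff_exp_subst moment_order_zero hκ0 hrec hm
  rw [← div_eq_iff (Nat.cast_ne_zero.mpr n.factorial_ne_zero),
    integral_hermite_div_factorial hgen hY,
    exp_subst_add (by simp [hκ0]) (by simp),
    coeff_mul, coeff_mul]
  refine sum_congr rfl fun p hp => ?_
  rw [hmoment p.1 (HasAntidiagonal.antidiagonal.fst_le hp)]

end HermiteMoment

section NormalizedCumulants

open PowerSeries

variable {K : Type*} [Field K] {κ : ℕ → K}

theorem X_pow_three_dvd_egf_add_C_mul_X_sq (h0 : κ 0 = 0) (h1 : κ 1 = 0) (h2 : κ 2 = 1) :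
    X ^ 3 ∣ egf κ + C (-1 / 2) * X ^ 2 := by
  refine X_pow_dvd_iff.mpr fun r hr => ?_
  interval_cases r
  · simp [h0]
  · simp [h1, coeff_X_pow]
  · simp [h2, neg_div]

theorem coeff_exp_subst_egf_add_C_mul_X_sq_mul_factorial [CharZero K] {n : ℕ}
    (hn : 0 < n) (h0 : κ 0 = 0) (h1 : κ 1 = 0) (h2 : κ 2 = 1) :
    coeff n ((PowerSeries.exp K).subst (egf κ + C (-1 / 2) * X ^ 2)) * n.factorial =
      ∑ k ∈ Icc 1 (n / 3), ∑ r ∈ Fintype.piFinset (fun _ : Fin k => Icc 3 n),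
        if ∑ i, r i = n then
          (∏ i, κ (r i)) / (∏ i, ((r i).factorial : K)) *
            ((n.factorial : K) / (k.factorial : K))
        else 0 := by
  rw [coeff_exp_subst_mul_factorial three_pos hn (X_pow_three_dvd_egf_add_C_mul_X_sq h0 h1 h2)]
  refine sum_congr rfl fun k _ => sum_congr rfl fun r hr => ?_
  have hcoeff (i : Fin k) :
      coeff (r i) (egf κ + C (-1 / 2) * X ^ 2) = κ (r i) / (r i).factorial := by
    have hri : r i ≠ 2 := by
      have := mem_Icc.mp (Fintype.mem_piFinset.mp hr i)
      omega
    simp [coeff_X_pow, hri]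
  simp only [hcoeff, prod_div_distrib]

end NormalizedCumulants

theorem memLp_of_integrable_abs_pow {Ω : Type*} [MeasurableSpace Ω] {P : Measure Ω} {Y : Ω → ℝ}
    {n : ℕ} (hn : n ≠ 0) (hY : AEStronglyMeasurable Y P)
    (h : Integrable (fun ω => |Y ω| ^ n) P) : MemLp Y n P := by
  refine (integrable_norm_rpow_iff hY (by exact_mod_cast hn) (by simp)).mp ?_
  simpa using h

/-- **Moments of Hermite polynomials in terms of cumulants.**
For a real random variable `Y` with mean `0`, variance `1` and finite `j`-th moment (`j ≥ 3`),
where `H` are the probabilists' Hermite polynomials (generating function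
`e^{tx - t²/2} = Σ_j H_j(x) t^j/j!`) and `κ r` is the `r`-th cumulant of `Y`
(`κ_r = i^{-r} (d^r/du^r) log E[e^{iuY}]` at `u = 0`), one has
`E[H_j(Y)] = Σ_{k=1}^{⌊j/3⌋} Σ_{r_1+...+r_k=j, r_i ≥ 3} (κ_{r_1}⋯κ_{r_k})/(r_1!⋯r_k!) · j!/k!`.
In particular `E[H_0(Y)] = 1` and `E[H_1(Y)] = E[H_2(Y)] = 0`. -/
theorem hermite_moment_cumulant_formula
    {Ω : Type*} [MeasurableSpace Ω] (P : Measure Ω) [IsProbabilityMeasure P]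
    (Y : Ω → ℝ) (hYmeas : Measurable Y)
    (j : ℕ) (hj : 3 ≤ j)
    (hmom : Integrable (fun ω => |Y ω| ^ j) P)
    (hmean : ∫ ω, Y ω ∂P = 0) (hvar : ∫ ω, (Y ω) ^ 2 ∂P = 1)
    (H : ℕ → ℝ → ℝ)
    (hgen : ∀ t x : ℝ, HasSum (fun n : ℕ => H n x * t ^ n / (Nat.factorial n))
      (Real.exp (t * x - t ^ 2 / 2)))
    (κ : ℕ → ℝ)
    (hκ : ∀ r : ℕ, r ≤ j →
      (κ r : ℂ) = Complex.I ^ (-(r : ℤ)) *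
        iteratedDeriv r (fun u : ℝ => Complex.log (∫ ω, Complex.exp (Complex.I * u * Y ω) ∂P)) 0) :
    (∫ ω, H j (Y ω) ∂P =
      ∑ k ∈ Finset.Icc 1 (j / 3),
        ∑ r ∈ Fintype.piFinset (fun _ : Fin k => Finset.Icc 3 j),
          if (∑ i, r i) = j then
            (∏ i, κ (r i)) / (∏ i, (Nat.factorial (r i) : ℝ)) *
              ((Nat.factorial j : ℝ) / (Nat.factorial k : ℝ))
          else 0) ∧
    (∫ ω, H 0 (Y ω) ∂P = 1) ∧ (∫ ω, H 1 (Y ω) ∂P = 0) ∧ (∫ ω, H 2 (Y ω) ∂P = 0) := by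
  have hY : MemLp Y j P :=
    memLp_of_integrable_abs_pow (by omega) hYmeas.aestronglyMeasurable hmom
  have hcum (r : ℕ) (hr : r ≤ j) : (κ r : ℂ) = cumulant Y r P := hκ r hr
  have hYn (n : ℕ) (hn : n ≤ j) : MemLp Y n P := hY.mono_exponent (mod_cast hn)
  have hmoment1 : moment Y 1 P = 0 := by simpa [moment_def] using hmean
  have hmoment2 : moment Y 2 P = 1 := by simpa [moment_def] using hvar
  have hκ0 : κ 0 = 0 := by simpa [cumulant_zero] using hcum 0 (by omega)
  have hκ1 : κ 1 = 0 := by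
    simpa [cumulant_one (mod_cast hYn 1 (by omega)), hmoment1] using hcum 1 (by omega)
  have hκ2 : κ 2 = 1 := by
    simpa [cumulant_two (hYn 2 (by omega)), hmoment1, hmoment2] using hcum 2 (by omega)
  have hint (n : ℕ) (hn : n ≤ j) :=
    integral_hermite_eq_coeff_exp_cumulant hgen (hYn n hn) fun r hr => hcum r (hr.trans hn)
  have hexpand {n : ℕ} (hn : 0 < n) :=
    coeff_exp_subst_egf_add_C_mul_X_sq_mul_factorial hn hκ0 hκ1 hκ2
  refine ⟨?_, ?_, ?_, ?_⟩
  · rw [hint j le_rfl, hexpand (by omega)]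
  · simp [hint 0 (by omega), constantCoeff_exp_subst, hκ0]
  · rw [hint 1 (by omega), hexpand one_pos]
    simp
  · rw [hint 2 (by omega), hexpand two_pos]
    simp
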